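/- In the group U, the subgroup K = ⟨z, w⟩ generated by z = (bc^{-1})^4 and w = (c^{-1}b)^4 is free abelian of rank 2; that is, K is isomorphic to Z ⊕ Z, with {z, w} a free generating set. -/

import Mathlib

/-- The defining relators of the group `U` on generators `a, b, c` (indexed `0, 1, 2`):
`a^4, b^4, c^4, (ab)^2, (bc)^2, (abc)^2, (a^2b^2)^4, a^2c^2b^2(ac)^2, [a,c⁻¹]b^2`,
where `[x,y] = x⁻¹y⁻¹xy`. -/
def Urels : Set (FreeGroup (Fin 3)) :=
  {(FreeGroup.of 0) ^ 4, (FreeGroup.of 1) ^ 4, (FreeGroup.of 2) ^ 4,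
   (FreeGroup.of 0 * FreeGroup.of 1) ^ 2,
   (FreeGroup.of 1 * FreeGroup.of 2) ^ 2,
   (FreeGroup.of 0 * FreeGroup.of 1 * FreeGroup.of 2) ^ 2,
   ((FreeGroup.of 0) ^ 2 * (FreeGroup.of 1) ^ 2) ^ 4,
   (FreeGroup.of 0) ^ 2 * (FreeGroup.of 2) ^ 2 * (FreeGroup.of 1) ^ 2 *
     (FreeGroup.of 0 * FreeGroup.of 2) ^ 2,
   (FreeGroup.of 0)⁻¹ * FreeGroup.of 2 * FreeGroup.of 0 * (FreeGroup.of 2)⁻¹ *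
     (FreeGroup.of 1) ^ 2}

/-- The finitely presented group `U`. -/
abbrev UGroup : Type := PresentedGroup Urels

/-- The generator `a` of `U`. -/
def Ua : UGroup := PresentedGroup.of 0

/-- The generator `b` of `U`. -/
def Ub : UGroup := PresentedGroup.of 1

/-- The generator `c` of `U`. -/
def Uc : UGroup := PresentedGroup.of 2

/-- The element `z = (bc⁻¹)^4` of `U`. -/
def Uz : UGroup := (Ub * Uc⁻¹) ^ 4

/-- The element `w = (c⁻¹b)^4` of `U`. -/
def Uw : UGroup := (Uc⁻¹ * Ub) ^ 4

def pa : Equiv.Perm (ℤ × ℤ) :=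
  ⟨fun p => (1 - p.1, p.2), fun p => (1 - p.1, p.2), fun p => by simp, fun p => by simp⟩

def pb : Equiv.Perm (ℤ × ℤ) :=
  ⟨fun p => (p.2 + 1, -p.1), fun p => (-p.2, p.1 - 1), fun p => by simp, fun p => by simp⟩

def pc : Equiv.Perm (ℤ × ℤ) :=
  ⟨fun p => (p.2, -p.1), fun p => (-p.2, p.1), fun p => by simp, fun p => by simp⟩

lemma pa_apply (p : ℤ × ℤ) : pa p = (1 - p.1, p.2) := rfl
lemma pb_apply (p : ℤ × ℤ) : pb p = (p.2 + 1, -p.1) := rfl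
lemma pc_apply (p : ℤ × ℤ) : pc p = (p.2, -p.1) := rfl
lemma pa_inv_apply (p : ℤ × ℤ) : pa⁻¹ p = (1 - p.1, p.2) := rfl
lemma pb_inv_apply (p : ℤ × ℤ) : pb⁻¹ p = (-p.2, p.1 - 1) := rfl
lemma pc_inv_apply (p : ℤ × ℤ) : pc⁻¹ p = (-p.2, p.1) := rfl

lemma perm_rels : ∀ r ∈ Urels, FreeGroup.lift ![pa, pb, pc] r = 1 := by
  intro r hr
  simp only [Urels, Set.mem_insert_iff, Set.mem_singleton_iff] at hr
  rcases hr with h | h | h | h | h | h | h | h | h <;> subst h <;>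
  · ext p <;>
    simp [pow_succ, Equiv.Perm.mul_apply, pa_apply, pb_apply, pc_apply, pa_inv_apply,
      pb_inv_apply, pc_inv_apply] <;> try ring

def permHom : UGroup →* Equiv.Perm (ℤ × ℤ) := PresentedGroup.toGroup perm_rels

lemma permHom_b : permHom Ub = pb := by simp [permHom, Ub]
lemma permHom_c : permHom Uc = pc := by simp [permHom, Uc]

lemma permHom_z : permHom Uz = Equiv.addRight ((4, 0) : ℤ × ℤ) := by
  ext p <;> simp [Uz, permHom_b, permHom_c, pow_succ, Equiv.Perm.mul_apply, pb_apply,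
    pc_inv_apply] <;> try ring

lemma permHom_w : permHom Uw = Equiv.addRight ((0, 4) : ℤ × ℤ) := by
  ext p <;> simp [Uw, permHom_b, permHom_c, pow_succ, Equiv.Perm.mul_apply, pb_apply,
    pc_inv_apply] <;> try ring

lemma U_rel {r : FreeGroup (Fin 3)} (h : r ∈ Urels) : PresentedGroup.mk Urels r = 1 :=
  PresentedGroup.one_of_mem h

lemma hb4 : Ub ^ 4 = 1 := by
  have := U_rel (r := (FreeGroup.of 1) ^ 4) (by simp [Urels])
  rwa [map_pow] at this

lemma hc4 : Uc ^ 4 = 1 := by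
  have := U_rel (r := (FreeGroup.of 2) ^ 4) (by simp [Urels])
  rwa [map_pow] at this

lemma hbc : (Ub * Uc) ^ 2 = 1 := by
  have := U_rel (r := (FreeGroup.of 1 * FreeGroup.of 2) ^ 2) (by simp [Urels])
  rwa [map_pow, map_mul] at this

lemma comm_aux {G : Type*} [Group G] (b c : G) (hb : b ^ 4 = 1) (hc : c ^ 4 = 1)
    (h : (b * c) ^ 2 = 1) : Commute (b * c⁻¹) (c⁻¹ * b) := by
  have hc2 : c⁻¹ * c⁻¹ = c * c := by
    rw [← mul_inv_rev, inv_eq_iff_mul_eq_one, ← hc]; simp [pow_succ, mul_assoc]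
  have hb2 : b⁻¹ * b⁻¹ = b * b := by
    rw [← mul_inv_rev, inv_eq_iff_mul_eq_one, ← hb]; simp [pow_succ, mul_assoc]
  have h1 : b * c = c⁻¹ * b⁻¹ := by
    rw [← mul_inv_rev, eq_inv_iff_mul_eq_one, ← h]; simp [pow_succ, mul_assoc]
  have h2 : c * b = b⁻¹ * c⁻¹ := by
    have : c * b = b⁻¹ * (b * c) * b := by group
    rw [this, h1]; group
  show b * c⁻¹ * (c⁻¹ * b) = c⁻¹ * b * (b * c⁻¹)
  calc b * c⁻¹ * (c⁻¹ * b) = b * (c⁻¹ * c⁻¹) * b := by group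
    _ = (b * c) * (c * b) := by rw [hc2]; group
    _ = c⁻¹ * (b⁻¹ * b⁻¹) * c⁻¹ := by rw [h1, h2]; group
    _ = c⁻¹ * b * (b * c⁻¹) := by rw [hb2]; group

lemma comm_zw : Commute Uz Uw := (comm_aux Ub Uc hb4 hc4 hbc).pow_pow 4 4

def theHom : Multiplicative (ℤ × ℤ) →* UGroup where
  toFun p := Uz ^ p.toAdd.1 * Uw ^ p.toAdd.2
  map_one' := by simp
  map_mul' p q := by
    simp only [toAdd_mul, Prod.fst_add, Prod.snd_add, zpow_add]
    have := (comm_zw.zpow_zpow q.toAdd.1 p.toAdd.2).eq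
    calc _ = Uz ^ p.toAdd.1 * (Uz ^ q.toAdd.1 * Uw ^ p.toAdd.2) * Uw ^ q.toAdd.2 := by group
      _ = _ := by rw [this]; group

lemma theHom_apply (p : Multiplicative (ℤ × ℤ)) :
    theHom p = Uz ^ p.toAdd.1 * Uw ^ p.toAdd.2 := rfl

lemma permHom_theHom (p : Multiplicative (ℤ × ℤ)) :
    permHom (theHom p) (0, 0) = (4 * p.toAdd.1, 4 * p.toAdd.2) := by
  rw [theHom_apply, map_mul, map_zpow, map_zpow, permHom_z, permHom_w]
  simp [Equiv.Perm.mul_apply, mul_comm]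

/-- The subgroup `K = ⟨z, w⟩` of `U` is free abelian of rank 2, with `{z, w}` a free
generating set: there is an injective homomorphism from `ℤ ⊕ ℤ` into `U` sending the
two free generators to `z` and `w`, whose range is `K`. -/
theorem K_free_abelian_rank_two :
    ∃ f : Multiplicative (ℤ × ℤ) →* UGroup,
      Function.Injective f ∧
      f (Multiplicative.ofAdd ((1 : ℤ), (0 : ℤ))) = Uz ∧
      f (Multiplicative.ofAdd ((0 : ℤ), (1 : ℤ))) = Uw ∧
      f.range = Subgroup.closure {Uz, Uw} := by
  refine ⟨theHom, ?_, by simp [theHom_apply], by simp [theHom_apply], ?_⟩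
  · intro p q hpq
    have h := permHom_theHom p
    rw [hpq, permHom_theHom q, Prod.mk.injEq] at h
    apply Multiplicative.toAdd.injective
    exact Prod.ext (by omega) (by omega)
  · apply le_antisymm
    · rintro _ ⟨p, rfl⟩
      rw [theHom_apply]
      exact mul_mem (zpow_mem (Subgroup.subset_closure (by simp)) _)
        (zpow_mem (Subgroup.subset_closure (by simp)) _)
    · rw [Subgroup.closure_le]
      rintro x (rfl | rfl)
      · exact ⟨Multiplicative.ofAdd (1, 0), by simp [theHom_apply]⟩
      · exact ⟨Multiplicative.ofAdd (0, 1), by simp [theHom_apply]⟩
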